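/- arXiv:1107.4382 — 2 statements merged into one kernel-verified Lean document; each statement's English description precedes it below -/
import Mathlib

section
/- Let a > 0 and K ≥ 2 an integer. The function g(γ) = exp(-a/γ)·(1 - (K-1)·γ)/γ on the interval (0, 1/(K-1)) attains a strict global maximum at the unique point γ̃_K = a/(1 + (K-1)·a), with maximal value g(γ̃_K) = exp(-(1 + (K-1)·a))/a. (g is, up to the positive factor R·η_i/σ², the utility of player i when all K players transmit at the common SINR γ.) -/
/-!
In the variable `x = a * (1 / γ - c)` the utility `exp (-a / γ) * (1 - c * γ) / γ` becomes
`exp (-(c * a)) / a * (x * exp (-x))`, and `x * exp (-x)` has its strict maximum `exp (-1)` at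
`x = 1`, which corresponds to `γ = a / (1 + c * a)`.
-/

/-- The utility `g γ` of a player at the common SINR `γ`, normalized by the factor `R * η / σ²`,
where `f γ = exp (-a / γ)` is the efficiency function. The real number `c` plays the role of the
number `K - 1` of interfering players. The value at `γ = 0` is the junk value `0`. -/
noncomputable def symmetricUtility (a c γ : ℝ) : ℝ :=
  Real.exp (-a / γ) * (1 - c * γ) / γ

theorem mul_exp_neg_lt_exp_neg_one {x : ℝ} (hx : x ≠ 1) : x * Real.exp (-x) < Real.exp (-1) := by
  have tangent_lt : x < Real.exp (x - 1) := by
    simpa only [sub_add_cancel] using Real.add_one_lt_exp (sub_ne_zero.2 hx)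
  calc
    x * Real.exp (-x) < Real.exp (x - 1) * Real.exp (-x) := by gcongr
    _ = Real.exp (-1) := by rw [← Real.exp_add]; ring_nf

section

variable {a c γ : ℝ}

theorem symmetricUtility_eq_mul_exp_neg (ha : a ≠ 0) (hγ : γ ≠ 0) :
    symmetricUtility a c γ =
      Real.exp (-(c * a)) / a * (a * (1 / γ - c) * Real.exp (-(a * (1 / γ - c)))) := by
  have exponent_eq : -a / γ = -(c * a) + -(a * (1 / γ - c)) := by ring
  rw [symmetricUtility, exponent_eq, Real.exp_add]
  field_simp

theorem mul_one_div_sub_eq_one_iff (hγ : γ ≠ 0) (hca : 1 + c * a ≠ 0) :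
    a * (1 / γ - c) = 1 ↔ γ = a / (1 + c * a) := by
  rw [eq_div_iff hca]
  field_simp
  constructor <;> intro h <;> linarith

theorem exp_div_mul_exp_neg_one :
    Real.exp (-(c * a)) / a * Real.exp (-1) = Real.exp (-(1 + c * a)) / a := by
  rw [div_mul_eq_mul_div, ← Real.exp_add, neg_add_rev]

theorem symmetricUtility_div_one_add_mul (ha : a ≠ 0) (hca : 1 + c * a ≠ 0) :
    symmetricUtility a c (a / (1 + c * a)) = Real.exp (-(1 + c * a)) / a := by
  have hγ : a / (1 + c * a) ≠ 0 := div_ne_zero ha hca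
  rw [symmetricUtility_eq_mul_exp_neg ha hγ, (mul_one_div_sub_eq_one_iff hγ hca).2 rfl, one_mul,
    exp_div_mul_exp_neg_one]

theorem symmetricUtility_lt_of_ne (ha : 0 < a) (hca : 1 + c * a ≠ 0) (hγ : γ ≠ 0)
    (hne : γ ≠ a / (1 + c * a)) :
    symmetricUtility a c γ < Real.exp (-(1 + c * a)) / a := by
  have hx : a * (1 / γ - c) ≠ 1 := mt (mul_one_div_sub_eq_one_iff hγ hca).1 hne
  rw [symmetricUtility_eq_mul_exp_neg ha.ne' hγ, ← exp_div_mul_exp_neg_one]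
  exact mul_lt_mul_of_pos_left (mul_exp_neg_lt_exp_neg_one hx) (by positivity)

theorem symmetric_utility_strict_max_general (ha : 0 < a) (hca : 0 < 1 + c * a) :
    0 < a / (1 + c * a) ∧ c * (a / (1 + c * a)) < 1 ∧
    symmetricUtility a c (a / (1 + c * a)) = Real.exp (-(1 + c * a)) / a ∧
    ∀ γ : ℝ, γ ≠ 0 → γ ≠ a / (1 + c * a) →
      symmetricUtility a c γ < Real.exp (-(1 + c * a)) / a := by
  refine ⟨div_pos ha hca, ?_, symmetricUtility_div_one_add_mul ha.ne' hca.ne',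
    fun _ => symmetricUtility_lt_of_ne ha hca.ne'⟩
  rw [← mul_div_assoc, div_lt_one hca]
  exact lt_one_add (c * a)

end

/-- For `a > 0` and `K ≥ 2`, the function `g γ = exp (-a/γ) * (1-(K-1)γ)/γ` on
`(0, 1/(K-1))` attains a strict global maximum at the unique point
`γ̃_K = a/(1+(K-1)a)`, with value `exp (-(1+(K-1)a))/a`. -/
theorem symmetric_utility_strict_max (a : ℝ) (ha : 0 < a) (K : ℕ) (hK : 2 ≤ K) :
    a / (1 + ((K : ℝ) - 1) * a) ∈ Set.Ioo (0 : ℝ) (1 / ((K : ℝ) - 1)) ∧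
    Real.exp (-a / (a / (1 + ((K : ℝ) - 1) * a)))
        * (1 - ((K : ℝ) - 1) * (a / (1 + ((K : ℝ) - 1) * a)))
        / (a / (1 + ((K : ℝ) - 1) * a))
      = Real.exp (-(1 + ((K : ℝ) - 1) * a)) / a ∧
    ∀ γ ∈ Set.Ioo (0 : ℝ) (1 / ((K : ℝ) - 1)), γ ≠ a / (1 + ((K : ℝ) - 1) * a) →
      Real.exp (-a / γ) * (1 - ((K : ℝ) - 1) * γ) / γ
        < Real.exp (-(1 + ((K : ℝ) - 1) * a)) / a := by
  have hc : 0 < (K : ℝ) - 1 := sub_pos.2 (mod_cast hK)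
  obtain ⟨hpos, hlt, hval, hmax⟩ :=
    symmetric_utility_strict_max_general ha (c := (K : ℝ) - 1) (by positivity)
  exact ⟨⟨hpos, (lt_div_iff₀' hc).2 hlt⟩, hval, fun γ hγ => hmax γ hγ.1.ne'⟩
end

section
/- Let K ≥ 1, a > 0, R > 0, σ² > 0 and η_1, ..., η_K > 0. For a nonempty set S of k players transmitting at the operating point (i.e., each i ∈ S uses power (σ²/η_i)·γ̃_k/(1-(k-1)·γ̃_k) with γ̃_k = a/(1+(k-1)·a), while players outside S use power 0 and get utility 0), the sum of instantaneous utilities equals C_k·Σ_{i∈S} η_i with C_k = R·exp(-(1+(k-1)·a))/(a·σ²) > 0. Consequently, for fixed cardinality k, the sum of utilities over all k-element subsets S is maximized exactly by the sets consisting of k players with the k largest channel gains η_i. -/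
/-- Power used by player `j` when the set `S` of players transmits at the
operating point with per-user SINR `γ̃_k = a/(1+(k-1)a)`, `k = S.card`,
and the players outside `S` are silent. -/
noncomputable def smuPower (K : ℕ) (a σ2 : ℝ) (η : Fin K → ℝ) (S : Finset (Fin K))
    (j : Fin K) : ℝ :=
  if j ∈ S then
    σ2 / η j * ((a / (1 + ((S.card : ℝ) - 1) * a)) /
      (1 - ((S.card : ℝ) - 1) * (a / (1 + ((S.card : ℝ) - 1) * a))))
  else 0

/-- Sum of instantaneous utilities of the transmitting players of `S` at the
operating-point profile `smuPower` (silent players have utility 0). -/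
noncomputable def smuSumUtility (K : ℕ) (a R σ2 : ℝ) (η : Fin K → ℝ)
    (S : Finset (Fin K)) : ℝ :=
  ∑ i ∈ S,
    R * Real.exp (-a / (smuPower K a σ2 η S i * η i /
        ((∑ j ∈ Finset.univ.erase i, smuPower K a σ2 η S j * η j) + σ2)))
      / smuPower K a σ2 η S i

/-! Writing `D = 1 + (k - 1) a`, the target SINR is `a / D` and `1 - (k - 1) a / D = 1 / D`, so
every active player is received at the same power `a σ²`, sees interference `(k - 1) a σ²`, and its
utility is proportional to its gain with a factor depending only on `k`. Maximizing the sum of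
utilities over `k`-sets is thus maximizing a sum of gains: exchanging one active player for a silent
one shows that an optimum consists of best users, and comparing two `k`-sets outside their
intersection gives the converse. -/

section TopSum

variable {ι M : Type*} [AddCommMonoid M] [PartialOrder M]

theorem sum_le_sum_of_card_eq_of_forall_le [IsOrderedAddMonoid M] {f : ι → M} {s t : Finset ι}
    (hcard : t.card = s.card) (h : ∀ i ∈ s, ∀ j ∈ t, f j ≤ f i) :
    ∑ j ∈ t, f j ≤ ∑ i ∈ s, f i := by
  let e : t ≃ s := Finset.equivOfCardEq hcard
  calc ∑ j ∈ t, f j = ∑ j : t, f j := (Finset.sum_coe_sort t f).symm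
    _ ≤ ∑ j : t, f (e j) := Finset.sum_le_sum fun j _ => h _ (e j).2 _ j.2
    _ = ∑ i : s, f i := e.sum_comp fun i : s => f i
    _ = ∑ i ∈ s, f i := Finset.sum_coe_sort s f

variable [IsOrderedCancelAddMonoid M] {f : ι → M} {s : Finset ι}

theorem sum_le_sum_of_card_eq_of_forall_notMem_le {t : Finset ι} (hcard : t.card = s.card)
    (h : ∀ i ∈ s, ∀ j ∉ s, f j ≤ f i) : ∑ j ∈ t, f j ≤ ∑ i ∈ s, f i := by
  classical
  rw [← Finset.sum_sdiff_le_sum_sdiff]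
  refine sum_le_sum_of_card_eq_of_forall_le (Finset.card_sdiff_comm hcard) fun i hi j hj => ?_
  exact h i (Finset.mem_sdiff.mp hi).1 j (Finset.mem_sdiff.mp hj).2

theorem le_of_sum_insert_erase_le [DecidableEq ι] {i j : ι} (hi : i ∈ s) (hj : j ∉ s)
    (h : ∑ l ∈ insert j (s.erase i), f l ≤ ∑ l ∈ s, f l) : f j ≤ f i := by
  rw [Finset.sum_insert (mt Finset.mem_of_mem_erase hj), ← Finset.add_sum_erase s f hi] at h
  exact le_of_add_le_add_right h

theorem forall_card_eq_sum_le_sum_iff :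
    (∀ t : Finset ι, t.card = s.card → ∑ i ∈ t, f i ≤ ∑ i ∈ s, f i) ↔
      ∀ i ∈ s, ∀ j ∉ s, f j ≤ f i := by
  classical
  refine ⟨fun h i hi j hj => le_of_sum_insert_erase_le hi hj (h _ ?_),
    fun h t ht => sum_le_sum_of_card_eq_of_forall_notMem_le ht h⟩
  rw [Finset.card_insert_of_notMem (mt Finset.mem_of_mem_erase hj), Finset.card_erase_add_one hi]

end TopSum

section Sinr

variable {ι : Type*} [Fintype ι] [DecidableEq ι]

/-- The signal-to-interference-plus-noise ratio of player `i` under the power profile `p`, with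
channel gains `η` and noise power `σ2`, as it occurs in the exponent of `smuSumUtility`. -/
noncomputable def sinr (p η : ι → ℝ) (σ2 : ℝ) (i : ι) : ℝ :=
  p i * η i / ((∑ j ∈ Finset.univ.erase i, p j * η j) + σ2)

theorem sinr_eq_of_equal_received_power {p η : ι → ℝ} {S : Finset ι} {q : ℝ}
    (hq : ∀ j, p j * η j = if j ∈ S then q else 0) (σ2 : ℝ) {i : ι} (hi : i ∈ S) :
    sinr p η σ2 i = q / (((S.card : ℝ) - 1) * q + σ2) := by
  have interference : ∑ j ∈ Finset.univ.erase i, p j * η j = ((S.card : ℝ) - 1) * q := by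
    simp only [hq, Finset.sum_ite_mem, Finset.erase_inter, Finset.univ_inter, Finset.sum_const,
      nsmul_eq_mul, Finset.cast_card_erase_of_mem hi]
  rw [sinr, interference, hq, if_pos hi]

end Sinr

theorem div_div_one_sub_mul_div {F : Type*} [Field F] {a c : F} (h : 1 + c * a ≠ 0) :
    a / (1 + c * a) / (1 - c * (a / (1 + c * a))) = a := by
  have hden : 1 - c * (a / (1 + c * a)) = 1 / (1 + c * a) := by
    field_simp
    ring
  rw [hden, div_div_div_cancel_right₀ h, div_one]

theorem one_add_card_sub_one_mul_pos {ι : Type*} {S : Finset ι} (hS : S.Nonempty) {a : ℝ}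
    (ha : 0 ≤ a) : 0 < 1 + ((S.card : ℝ) - 1) * a := by
  have hcard : (1 : ℝ) ≤ S.card := Nat.one_le_cast.mpr hS.card_pos
  linarith [mul_nonneg (sub_nonneg.mpr hcard) ha]

section OperatingPoint

variable {K : ℕ} {a σ2 : ℝ} {η : Fin K → ℝ} {S : Finset (Fin K)}

theorem smuPower_of_mem (hD : 1 + ((S.card : ℝ) - 1) * a ≠ 0) {i : Fin K} (hi : i ∈ S) :
    smuPower K a σ2 η S i = σ2 / η i * a := by
  rw [smuPower, if_pos hi, div_div_one_sub_mul_div hD]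

theorem smuPower_mul_gain (hD : 1 + ((S.card : ℝ) - 1) * a ≠ 0) (hη : ∀ i ∈ S, η i ≠ 0)
    (j : Fin K) : smuPower K a σ2 η S j * η j = if j ∈ S then a * σ2 else 0 := by
  split_ifs with hj
  · rw [smuPower_of_mem hD hj, mul_right_comm, div_mul_cancel₀ _ (hη j hj), mul_comm]
  · rw [smuPower, if_neg hj, zero_mul]

theorem sinr_smuPower (hD : 1 + ((S.card : ℝ) - 1) * a ≠ 0) (hσ : σ2 ≠ 0)
    (hη : ∀ i ∈ S, η i ≠ 0) {i : Fin K} (hi : i ∈ S) :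
    sinr (smuPower K a σ2 η S) η σ2 i = a / (1 + ((S.card : ℝ) - 1) * a) := by
  rw [sinr_eq_of_equal_received_power (smuPower_mul_gain hD hη) σ2 hi,
    ← mul_div_mul_right a (1 + ((S.card : ℝ) - 1) * a) hσ]
  ring

theorem smuSumUtility_eq (R : ℝ) (ha : a ≠ 0) (hD : 1 + ((S.card : ℝ) - 1) * a ≠ 0) (hσ : σ2 ≠ 0)
    (hη : ∀ i ∈ S, η i ≠ 0) :
    smuSumUtility K a R σ2 η S =
      R * Real.exp (-(1 + ((S.card : ℝ) - 1) * a)) / (a * σ2) * ∑ i ∈ S, η i := by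
  rw [smuSumUtility, Finset.mul_sum]
  refine Finset.sum_congr rfl fun i hi => ?_
  have hexp : -a / sinr (smuPower K a σ2 η S) η σ2 i = -(1 + ((S.card : ℝ) - 1) * a) := by
    rw [sinr_smuPower hD hσ hη hi, neg_div, div_div_cancel₀ ha]
  rw [← sinr, hexp, smuPower_of_mem hD hi]
  field_simp [hη i hi]

end OperatingPoint

/-- For a nonempty set `S` of `k` transmitting players at the operating point,
the sum of utilities equals `C_k * ∑_{i∈S} η_i` with
`C_k = R * exp (-(1+(k-1)a)) / (a σ²) > 0`; consequently, among the sets of the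
same cardinality `k`, `S` maximizes the sum of utilities iff it consists of
players with the `k` largest channel gains. -/
theorem smu_sum_utility_and_best_users (K : ℕ) (hK : 1 ≤ K) (a R σ2 : ℝ)
    (ha : 0 < a) (hR : 0 < R) (hσ : 0 < σ2) (η : Fin K → ℝ) (hη : ∀ i, 0 < η i)
    (S : Finset (Fin K)) (hS : S.Nonempty) :
    smuSumUtility K a R σ2 η S
        = R * Real.exp (-(1 + ((S.card : ℝ) - 1) * a)) / (a * σ2) * ∑ i ∈ S, η i ∧
    0 < R * Real.exp (-(1 + ((S.card : ℝ) - 1) * a)) / (a * σ2) ∧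
    ((∀ T : Finset (Fin K), T.card = S.card →
        smuSumUtility K a R σ2 η T ≤ smuSumUtility K a R σ2 η S)
      ↔ ∀ i ∈ S, ∀ j ∉ S, η j ≤ η i) := by
  have hD : 1 + ((S.card : ℝ) - 1) * a ≠ 0 := (one_add_card_sub_one_mul_pos hS ha.le).ne'
  have hC : 0 < R * Real.exp (-(1 + ((S.card : ℝ) - 1) * a)) / (a * σ2) := by positivity
  have sum_utility (T : Finset (Fin K)) (hT : T.card = S.card) :
      smuSumUtility K a R σ2 η T
        = R * Real.exp (-(1 + ((S.card : ℝ) - 1) * a)) / (a * σ2) * ∑ i ∈ T, η i := by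
    rw [← hT] at hD ⊢
    exact smuSumUtility_eq R ha.ne' hD hσ.ne' fun i _ => (hη i).ne'
  refine ⟨sum_utility S rfl, hC, ?_⟩
  rw [← forall_card_eq_sum_le_sum_iff]
  refine forall₂_congr fun T hT => ?_
  rw [sum_utility T hT, sum_utility S rfl, mul_le_mul_iff_right₀ hC]
end
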